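/- Let (X,T) be a TDS with finite topological entropy and Φ a subadditive potential with β(Φ) > -∞. Then the pressure function t ↦ P(T, tΦ) is a continuous convex real-valued function on (0,∞), and lim_{t→∞} P(t)/t = β(Φ). -/

import Mathlib

open MeasureTheory Filter Topology Set
open scoped ENNReal NNReal

/-- Positive part of an extended real, as an extended nonnegative real. -/
noncomputable def EReal.posPart (a : EReal) : ℝ≥0∞ :=
  if a = ⊤ then ⊤ else ENNReal.ofReal a.toReal

/-- `EReal`-valued logarithm of a real number: `elog r = -∞` for `r ≤ 0`. -/
noncomputable def elog (r : ℝ) : EReal := ENNReal.log (ENNReal.ofReal r)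

/-- The integral of an `EReal`-valued function, with values in `[-∞, ∞]`. -/
noncomputable def eint {X : Type*} [MeasurableSpace X] (μ : Measure X) (f : X → EReal) : EReal :=
  ((∫⁻ x, (f x).posPart ∂μ : ℝ≥0∞) : EReal) - ((∫⁻ x, (-f x).posPart ∂μ : ℝ≥0∞) : EReal)

/-- `Φ = {log φₙ}` is a subadditive potential for `T`: each `φₙ` is continuous,
nonnegative, and `φ_{n+m}(x) ≤ φₙ(x) · φₘ(Tⁿ x)`. -/
def SubadditivePotential {X : Type*} [TopologicalSpace X] (T : X → X) (φ : ℕ → X → ℝ) : Prop :=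
  (∀ n, 1 ≤ n → Continuous (φ n)) ∧ (∀ n x, 1 ≤ n → 0 ≤ φ n x) ∧
    (∀ m n : ℕ, 1 ≤ m → 1 ≤ n → ∀ x, φ (n + m) x ≤ φ n x * φ m (T^[n] x))

/-!
For an invariant measure `μ`, the line `t ↦ h μ + t χ(μ)` has slope at most `β`, because
`∫ log φₙ dμ ≤ log sup φₙ`. The pressure is the supremum of these lines, so it is convex, and its
asymptotic slope is the supremum of the exponents `χ(μ)`.

That this supremum is `β` itself, and attained, is the heart of the matter. Let `xₙ` maximise `φₙ`,
and let `μ` be a limit of the uniform measures on the orbit segments `xₙ, …, Tⁿ⁻¹ xₙ`.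
Cutting such a segment into blocks of length `m` at each of the `m` possible offsets and multiplying
the resulting bounds gives `m log φₙ(xₙ) ≤ ∑ log φₘ(Tⁱ xₙ) + O(1)`; dividing by `n` and letting
`n → ∞` yields `m β ≤ ∫ log φₘ dμ` for every `m`. As `log φₘ` may take the value `-∞`, the limit is
taken for the truncations `max (log φₘ) (-k)` and is followed by `k → ∞`.
-/

section ExtendedReal

lemma posPart_eq_toENNReal : EReal.posPart = EReal.toENNReal := rfl

lemma monotone_posPart : Monotone EReal.posPart := fun _ _ ↦ EReal.toENNReal_le_toENNReal

lemma coe_posPart_sub_coe_posPart_neg (a : EReal) :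
    (a.posPart : EReal) - ((-a).posPart : EReal) = a := by
  simp only [posPart_eq_toENNReal, EReal.coe_toENNReal_eq_max]
  rcases le_total 0 a with ha | ha
  · rw [max_eq_right ha, max_eq_left (EReal.neg_le_zero.2 ha), sub_zero]
  · rw [max_eq_left ha, max_eq_right (EReal.neg_nonneg.2 ha), zero_sub, neg_neg]

lemma posPart_max_neg_natCast (a : EReal) (k : ℕ) :
    (max a (-(k : EReal))).posPart = a.posPart := by
  have hk : (-(k : EReal)).posPart = 0 := EReal.toENNReal_of_nonpos (by simp)
  rw [monotone_posPart.map_max, hk, max_eq_left zero_le]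

lemma posPart_neg_max_neg_natCast (a : EReal) (k : ℕ) :
    (-max a (-(k : EReal))).posPart = min (-a).posPart k := by
  have hneg : -max a (-(k : EReal)) = min (-a) k := by
    rw [EReal.neg_strictAnti.antitone.map_max, neg_neg]
  have hk : (k : EReal).posPart = k := EReal.toENNReal_coe (x := k)
  rw [hneg, monotone_posPart.map_min, hk]

lemma elog_of_pos {r : ℝ} (hr : 0 < r) : elog r = (Real.log r : EReal) :=
  ENNReal.log_ofReal_of_pos hr

lemma elog_of_nonpos {r : ℝ} (hr : r ≤ 0) : elog r = ⊥ := by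
  rw [elog, ENNReal.ofReal_of_nonpos hr, ENNReal.log_zero]

lemma elog_mono : Monotone elog := fun _ _ h ↦
  ENNReal.log_monotone (ENNReal.ofReal_le_ofReal h)

lemma measurable_elog : Measurable elog :=
  ENNReal.measurable_log.comp ENNReal.measurable_ofReal

lemma eventually_pos_of_tendsto_elog_div {u : ℕ → ℝ} {β : ℝ}
    (hu : Tendsto (fun n : ℕ ↦ elog (u n) / (n : EReal)) atTop (𝓝 (β : EReal))) :
    ∀ᶠ n in atTop, 0 < u n := by
  filter_upwards [hu.eventually_ne (EReal.coe_ne_bot β), eventually_ge_atTop 1] with n hn hn1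
  contrapose! hn
  rw [elog_of_nonpos hn, EReal.bot_div_of_pos_ne_top (by exact_mod_cast hn1)
    (EReal.natCast_ne_top n)]

lemma tendsto_log_div_of_tendsto_elog_div {u : ℕ → ℝ} {β : ℝ}
    (hu : Tendsto (fun n : ℕ ↦ elog (u n) / (n : EReal)) atTop (𝓝 (β : EReal))) :
    Tendsto (fun n : ℕ ↦ Real.log (u n) / n) atTop (𝓝 β) := by
  rw [← EReal.tendsto_coe]
  refine hu.congr' ?_
  filter_upwards [eventually_pos_of_tendsto_elog_div hu] with n hn
  rw [elog_of_pos hn, EReal.coe_div, EReal.coe_natCast]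

end ExtendedReal

section TruncatedLog

/-- The real logarithm truncated below at `-k`, i.e. `max (log r) (-k)` with `log r = -∞` for
`r ≤ 0`. The maximum is taken inside the logarithm so as to avoid the junk values of `Real.log`. -/
noncomputable def truncLog (k : ℕ) (r : ℝ) : ℝ := Real.log (max r (Real.exp (-k)))

variable (k : ℕ)

lemma continuous_truncLog : Continuous (truncLog k) :=
  (continuous_id.max continuous_const).log fun _ ↦ (lt_max_of_lt_right (Real.exp_pos _)).ne'

lemma neg_natCast_le_truncLog (r : ℝ) : -(k : ℝ) ≤ truncLog k r :=
  (Real.le_log_iff_exp_le (lt_max_of_lt_right (Real.exp_pos _))).2 (le_max_right _ _)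

lemma log_le_truncLog {r : ℝ} (hr : 0 < r) : Real.log r ≤ truncLog k r :=
  Real.log_le_log hr (le_max_left _ _)

lemma coe_truncLog (r : ℝ) : (truncLog k r : EReal) = max (elog r) (-(k : EReal)) := by
  have hk : elog (Real.exp (-k)) = -(k : EReal) := by
    rw [elog_of_pos (Real.exp_pos _), Real.log_exp, EReal.coe_neg, EReal.coe_natCast]
  rw [truncLog, ← elog_of_pos (lt_max_of_lt_right (Real.exp_pos _)), elog_mono.map_max, hk]

end TruncatedLog

section ExtendedIntegral

variable {X : Type*} [MeasurableSpace X] {μ : Measure X}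

lemma eint_mono_ae {f g : X → EReal} (hfg : f ≤ᵐ[μ] g) : eint μ f ≤ eint μ g := by
  refine EReal.sub_le_sub (EReal.coe_ennreal_le_coe_ennreal_iff.2 (lintegral_mono_ae ?_))
    (EReal.coe_ennreal_le_coe_ennreal_iff.2 (lintegral_mono_ae ?_))
  · exact hfg.mono fun x hx ↦ monotone_posPart hx
  · exact hfg.mono fun x hx ↦ monotone_posPart (EReal.neg_le_neg_iff.2 hx)

lemma eint_const [IsProbabilityMeasure μ] (c : EReal) : eint μ (fun _ ↦ c) = c := by
  simp only [eint, lintegral_const, measure_univ, mul_one, coe_posPart_sub_coe_posPart_neg]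

lemma eint_elog_le_elog_iSup [IsProbabilityMeasure μ] {f : X → ℝ} (hf : BddAbove (range f)) :
    eint μ (fun x ↦ elog (f x)) ≤ elog (⨆ x, f x) :=
  (eint_mono_ae (ae_of_all μ fun x ↦ elog_mono (le_ciSup hf x))).trans_eq (eint_const _)

lemma eint_coe {f : X → ℝ} (hf : Integrable f μ) :
    eint μ (fun x ↦ (f x : EReal)) = (∫ x, f x ∂μ : ℝ) := by
  have hneg : ∫⁻ x, ENNReal.ofReal (-f x) ∂μ ≠ ⊤ := hf.neg.lintegral_lt_top.ne
  rw [integral_eq_lintegral_pos_part_sub_lintegral_neg_part hf, EReal.coe_sub,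
    EReal.coe_ennreal_toReal hf.lintegral_lt_top.ne, EReal.coe_ennreal_toReal hneg]
  simp only [eint, posPart_eq_toENNReal, ← EReal.coe_neg, EReal.real_coe_toENNReal]

lemma tendsto_eint_max_neg_natCast {f : X → EReal} (hf : AEMeasurable f μ)
    (hpos : ∫⁻ x, (f x).posPart ∂μ ≠ ⊤) :
    Tendsto (fun k : ℕ ↦ eint μ (fun x ↦ max (f x) (-(k : EReal)))) atTop (𝓝 (eint μ f)) := by
  have hneg : Tendsto (fun k : ℕ ↦ ∫⁻ x, min (-f x).posPart k ∂μ) atTop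
      (𝓝 (∫⁻ x, (-f x).posPart ∂μ)) := by
    refine lintegral_tendsto_of_tendsto_of_monotone
      (fun k ↦ (measurable_neg.comp_aemeasurable hf).ereal_toENNReal.min aemeasurable_const)
      (ae_of_all _ fun x k l hkl ↦ min_le_min le_rfl (Nat.cast_le.2 hkl)) (ae_of_all _ fun x ↦ ?_)
    simpa using tendsto_const_nhds.min ENNReal.tendsto_nat_nhds_top
  simp only [eint, posPart_max_neg_natCast, posPart_neg_max_neg_natCast, sub_eq_add_neg]
  have hposE : ((∫⁻ x, (f x).posPart ∂μ : ℝ≥0∞) : EReal) ≠ ⊤ := by simpa using hpos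
  exact (EReal.continuousAt_add (.inl hposE) (.inl (EReal.coe_ennreal_ne_bot _))).tendsto.comp
    (tendsto_const_nhds.prodMk_nhds
      ((continuous_coe_ennreal_ereal.neg.tendsto _).comp hneg))

lemma tendsto_integral_truncLog {f : X → ℝ} (hf : AEMeasurable f μ)
    (hint : ∀ k, Integrable (fun x ↦ truncLog k (f x)) μ) :
    Tendsto (fun k ↦ ((∫ x, truncLog k (f x) ∂μ : ℝ) : EReal)) atTop
      (𝓝 (eint μ fun x ↦ elog (f x))) := by
  have hpos : ∫⁻ x, (elog (f x)).posPart ∂μ ≠ ⊤ := by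
    refine ne_top_of_le_ne_top (hint 0).lintegral_lt_top.ne (lintegral_mono fun x ↦ ?_)
    rw [← EReal.real_coe_toENNReal, coe_truncLog]
    exact EReal.toENNReal_le_toENNReal (le_max_left _ _)
  refine (tendsto_eint_max_neg_natCast (measurable_elog.comp_aemeasurable hf) hpos).congr
    fun k ↦ ?_
  simp only [← eint_coe (hint k), coe_truncLog, Function.comp_apply]

end ExtendedIntegral

section KrylovBogoliubov

lemma birkhoffAverage_comp_self (R : Type*) {α M : Type*} [DivisionSemiring R] [AddCommMonoid M]
    [Module R M] (f : α → α) (g : α → M) (n : ℕ) (x : α) :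
    birkhoffAverage R f (g ∘ f) n x = birkhoffAverage R f g n (f x) := by
  simp only [birkhoffAverage, birkhoffSum, Function.comp_apply, ← Function.iterate_succ_apply,
    Function.iterate_succ_apply']

variable {X : Type*} [MeasurableSpace X]

/-- The `T`-invariant probability measures. A measure `μ` for which `T` is not
a.e. measurable is excluded, since then `Measure.map T μ` is zero by convention. -/
def invariantMeasures (T : X → X) : Set (ProbabilityMeasure X) :=
  {μ | Measure.map T (μ : Measure X) = μ}

/-- The uniform probability measure on the orbit segment `x, T x, …, Tⁿ x`, which has `n + 1`
points counted with multiplicity. -/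
noncomputable def empiricalMeasure (T : X → X) (n : ℕ) (x : X) : ProbabilityMeasure X :=
  ⟨((n + 1 : ℕ) : ℝ≥0∞)⁻¹ • ∑ i ∈ Finset.range (n + 1), Measure.dirac (T^[i] x), ⟨by
    simp [ENNReal.inv_mul_cancel]⟩⟩

lemma integral_empiricalMeasure (T : X → X) (n : ℕ) (x : X) {f : X → ℝ}
    (hf : StronglyMeasurable f) :
    ∫ y, f y ∂(empiricalMeasure T n x : Measure X) = birkhoffAverage ℝ T f (n + 1) x := by
  have hint : ∀ i ∈ Finset.range (n + 1), Integrable f (Measure.dirac (T^[i] x)) := fun i _ ↦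
    integrable_dirac' hf (by simp)
  rw [empiricalMeasure, ProbabilityMeasure.coe_mk, integral_smul_measure,
    integral_finsetSum_measure hint]
  simp only [integral_dirac' _ _ hf, ENNReal.toReal_inv, ENNReal.toReal_natCast, birkhoffAverage,
    birkhoffSum]

variable [TopologicalSpace X] [BorelSpace X] [HasOuterApproxClosed X]

lemma mem_invariantMeasures_of_tendsto_birkhoffAverage {T : X → X} (hT : Continuous T)
    {l : Filter ℕ} [l.NeBot] (hl : l ≤ atTop) {x : ℕ → X}
    {μ : ProbabilityMeasure X}
    (hμ : ∀ f : X → ℝ, Continuous f →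
      Tendsto (fun n ↦ birkhoffAverage ℝ T f (n + 1) (x n)) l (𝓝 (∫ y, f y ∂(μ : Measure X)))) :
    μ ∈ invariantMeasures T := by
  have : IsProbabilityMeasure (Measure.map T (μ : Measure X)) :=
    Measure.isProbabilityMeasure_map hT.measurable.aemeasurable
  refine ext_of_forall_integral_eq_of_IsFiniteMeasure fun f ↦ ?_
  rw [integral_map hT.measurable.aemeasurable f.continuous.aestronglyMeasurable]
  obtain ⟨C, hC⟩ := Metric.isBounded_range_iff.1 f.isBounded_range
  have hdist : Tendsto (fun n ↦ dist (birkhoffAverage ℝ T (f ∘ T) (n + 1) (x n))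
      (birkhoffAverage ℝ T f (n + 1) (x n))) l (𝓝 0) := by
    refine squeeze_zero (fun _ ↦ dist_nonneg) (fun n ↦ ?_)
      (((tendsto_const_div_atTop_nhds_zero_nat C).comp (tendsto_add_atTop_nat 1)).mono_left hl)
    rw [birkhoffAverage_comp_self, dist_birkhoffAverage_apply_birkhoffAverage]
    exact div_le_div_of_nonneg_right (hC _ _) (Nat.cast_nonneg _)
  exact dist_eq_zero.1 (tendsto_nhds_unique
    ((hμ _ (f.continuous.comp hT)).dist (hμ _ f.continuous)) hdist)

theorem exists_mem_invariantMeasures_tendsto_birkhoffAverage [CompactSpace X] [T2Space X]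
    {T : X → X} (hT : Continuous T) (x : ℕ → X) :
    ∃ μ ∈ invariantMeasures T, ∃ U : Ultrafilter ℕ, (U : Filter ℕ) ≤ atTop ∧
      ∀ f : X → ℝ, Continuous f →
        Tendsto (fun n ↦ birkhoffAverage ℝ T f (n + 1) (x n)) U
          (𝓝 (∫ y, f y ∂(μ : Measure X))) := by
  let U : Ultrafilter ℕ := Ultrafilter.of atTop
  have hU : (U : Filter ℕ) ≤ atTop := Ultrafilter.of_le atTop
  obtain ⟨μ, -, hμ⟩ := isCompact_univ.ultrafilter_le_nhds
    (U.map fun n ↦ empiricalMeasure T n (x n)) (by simp)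
  have hlim (f : X → ℝ) (hf : Continuous f) :
      Tendsto (fun n ↦ birkhoffAverage ℝ T f (n + 1) (x n)) U
        (𝓝 (∫ y, f y ∂(μ : Measure X))) := by
    simpa only [BoundedContinuousFunction.mkOfCompact_apply, ContinuousMap.coe_mk,
      integral_empiricalMeasure _ _ _ hf.stronglyMeasurable] using
      ProbabilityMeasure.tendsto_iff_forall_integral_tendsto.1 hμ
        (BoundedContinuousFunction.mkOfCompact ⟨f, hf⟩)
  exact ⟨μ, mem_invariantMeasures_of_tendsto_birkhoffAverage hT hU hlim, U, hU, hlim⟩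

end KrylovBogoliubov

section Cocycle

variable {X : Type*}

/-- The purely algebraic part of `SubadditivePotential`: nonnegativity and the cocycle inequality,
both for positive indices only. -/
def IsSubmultiplicativeCocycle (T : X → X) (φ : ℕ → X → ℝ) : Prop :=
  (∀ n x, 1 ≤ n → 0 ≤ φ n x) ∧
    ∀ m n : ℕ, 1 ≤ m → 1 ≤ n → ∀ x, φ (n + m) x ≤ φ n x * φ m (T^[n] x)

/-- The product of the values of `φ` along the `m` orbit segments that start at `x, …, Tᵐ⁻¹ x` and
all end at `Tⁿ⁺ᵐ x`. It handles the `m` possible offsets of a cutting into blocks of length `m`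
simultaneously. -/
def staggeredProd (T : X → X) (φ : ℕ → X → ℝ) (m n : ℕ) (x : X) : ℝ :=
  ∏ i ∈ Finset.range m, φ (n + (m - i)) (T^[i] x)

namespace IsSubmultiplicativeCocycle

variable {T : X → X} {φ : ℕ → X → ℝ}

-- Both products share the segments starting at `T x, …, Tᵐ⁻¹ x`; on the remaining segment of the
-- left-hand side, a block of length `m` is split off.
lemma staggeredProd_succ_le (hφ : IsSubmultiplicativeCocycle T φ) {m : ℕ} (hm : 1 ≤ m) (n : ℕ)
    (x : X) : staggeredProd T φ m (n + 1) x ≤ φ m x * staggeredProd T φ m n (T x) := by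
  obtain ⟨l, rfl⟩ := Nat.exists_eq_add_of_le' hm
  set common := ∏ i ∈ Finset.range l, φ (n + (l + 1 - i)) (T^[i + 1] x) with hcommon
  have hleft : staggeredProd T φ (l + 1) (n + 1) x = common * φ (l + 1 + (n + 1)) x := by
    rw [staggeredProd, Finset.prod_range_succ', hcommon]
    congr 1
    · refine Finset.prod_congr rfl fun i hi ↦ ?_
      have hil := Finset.mem_range.1 hi
      congr 1
      omega
    · congr 1
      omega
  have hright : staggeredProd T φ (l + 1) n (T x) = common * φ (n + 1) (T^[l + 1] x) := by
    simp only [staggeredProd, Finset.prod_range_succ, hcommon, Function.iterate_succ_apply,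
      Nat.add_sub_cancel_left]
  have hcommon_nonneg : 0 ≤ common := Finset.prod_nonneg fun i hi ↦ hφ.1 _ _ (by
    have := Finset.mem_range.1 hi
    omega)
  calc staggeredProd T φ (l + 1) (n + 1) x
      = common * φ (l + 1 + (n + 1)) x := hleft
    _ ≤ common * (φ (l + 1) x * φ (n + 1) (T^[l + 1] x)) :=
        mul_le_mul_of_nonneg_left (hφ.2 (n + 1) (l + 1) (by omega) hm x) hcommon_nonneg
    _ = φ (l + 1) x * staggeredProd T φ (l + 1) n (T x) := by rw [hright]; ring

lemma staggeredProd_le (hφ : IsSubmultiplicativeCocycle T φ) {m : ℕ} (hm : 1 ≤ m) (n : ℕ)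
    (x : X) : staggeredProd T φ m n x ≤
      (∏ i ∈ Finset.range n, φ m (T^[i] x)) * staggeredProd T φ m 0 (T^[n] x) := by
  induction n generalizing x with
  | zero => simp
  | succ n ih =>
    calc staggeredProd T φ m (n + 1) x
        ≤ φ m x * staggeredProd T φ m n (T x) := hφ.staggeredProd_succ_le hm n x
      _ ≤ φ m x * ((∏ i ∈ Finset.range n, φ m (T^[i] (T x))) *
            staggeredProd T φ m 0 (T^[n] (T x))) :=
          mul_le_mul_of_nonneg_left (ih (T x)) (hφ.1 m x hm)
      _ = (∏ i ∈ Finset.range (n + 1), φ m (T^[i] x)) *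
            staggeredProd T φ m 0 (T^[n + 1] x) := by
          simp only [Finset.prod_range_succ', Function.iterate_succ_apply,
            Function.iterate_zero_apply]
          ring

lemma staggeredProd_zero_le_pow (hφ : IsSubmultiplicativeCocycle T φ) {m : ℕ} {M : ℝ}
    (hM : ∀ i ∈ Icc 1 m, ∀ x, φ i x ≤ M) (x : X) : staggeredProd T φ m 0 x ≤ M ^ m := by
  have hmem {i : ℕ} (hi : i ∈ Finset.range m) : 0 + (m - i) ∈ Icc 1 m := by
    have := Finset.mem_range.1 hi
    exact mem_Icc.2 (by omega)
  simpa only [staggeredProd, Finset.prod_const, Finset.card_range] using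
    Finset.prod_le_prod (fun i hi ↦ hφ.1 _ _ (hmem hi).1) fun i hi ↦ hM _ (hmem hi) (T^[i] x)

lemma pow_le_pow_mul_staggeredProd (hφ : IsSubmultiplicativeCocycle T φ) {m : ℕ} {M : ℝ}
    (hM1 : 1 ≤ M) (hM : ∀ i ∈ Icc 1 m, ∀ x, φ i x ≤ M) (n : ℕ) (x : X) :
    φ (n + m) x ^ m ≤ M ^ m * staggeredProd T φ m n x := by
  have hfactor : ∀ i ∈ Finset.range m, φ (n + m) x ≤ M * φ (n + (m - i)) (T^[i] x) := by
    intro i hi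
    have him := Finset.mem_range.1 hi
    have hnn : 0 ≤ φ (n + (m - i)) (T^[i] x) := hφ.1 _ _ (by omega)
    rcases Nat.eq_zero_or_pos i with rfl | hi0
    · exact le_mul_of_one_le_left hnn hM1
    · have hsub := hφ.2 (n + (m - i)) i (by omega) hi0 x
      rw [show i + (n + (m - i)) = n + m by omega] at hsub
      exact hsub.trans (mul_le_mul_of_nonneg_right (hM i ⟨hi0, him.le⟩ x) hnn)
  calc φ (n + m) x ^ m = ∏ _i ∈ Finset.range m, φ (n + m) x := by simp
    _ ≤ ∏ i ∈ Finset.range m, M * φ (n + (m - i)) (T^[i] x) :=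
        Finset.prod_le_prod (fun i hi ↦ hφ.1 _ _ (by
          have := Finset.mem_range.1 hi
          omega)) hfactor
    _ = M ^ m * staggeredProd T φ m n x := by
        rw [Finset.prod_mul_distrib, Finset.prod_const, Finset.card_range, staggeredProd]

theorem pow_le_pow_mul_prod (hφ : IsSubmultiplicativeCocycle T φ) {m : ℕ} (hm : 1 ≤ m) {M : ℝ}
    (hM1 : 1 ≤ M) (hM : ∀ i ∈ Icc 1 m, ∀ x, φ i x ≤ M) (n : ℕ) (x : X) :
    φ (n + m) x ^ m ≤ M ^ (2 * m) * ∏ i ∈ Finset.range n, φ m (T^[i] x) := by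
  have hprod : 0 ≤ ∏ i ∈ Finset.range n, φ m (T^[i] x) := Finset.prod_nonneg fun i _ ↦ hφ.1 _ _ hm
  have hMm : 0 ≤ M ^ m := by positivity
  calc φ (n + m) x ^ m
      ≤ M ^ m * staggeredProd T φ m n x := hφ.pow_le_pow_mul_staggeredProd hM1 hM n x
    _ ≤ M ^ m * ((∏ i ∈ Finset.range n, φ m (T^[i] x)) * M ^ m) :=
        mul_le_mul_of_nonneg_left ((hφ.staggeredProd_le hm n x).trans
          (mul_le_mul_of_nonneg_left (hφ.staggeredProd_zero_le_pow hM _) hprod)) hMm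
    _ = M ^ (2 * m) * ∏ i ∈ Finset.range n, φ m (T^[i] x) := by ring

lemma mul_log_le_add_birkhoffSum (hφ : IsSubmultiplicativeCocycle T φ) {m : ℕ} (hm : 1 ≤ m) {M : ℝ}
    (hM1 : 1 ≤ M) (hM : ∀ i ∈ Icc 1 m, ∀ x, φ i x ≤ M) {n : ℕ} {x : X} (hpos : 0 < φ (n + m) x)
    (k : ℕ) :
    m * Real.log (φ (n + m) x) ≤
      2 * m * Real.log M + birkhoffSum T (fun y ↦ truncLog k (φ m y)) n x := by
  have hle := hφ.pow_le_pow_mul_prod hm hM1 hM n x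
  have hM0 : 0 < M ^ (2 * m) := by positivity
  have hprod : 0 < ∏ i ∈ Finset.range n, φ m (T^[i] x) :=
    pos_of_mul_pos_right ((pow_pos hpos m).trans_le hle) hM0.le
  have hfactor : ∀ i ∈ Finset.range n, 0 < φ m (T^[i] x) := fun i hi ↦
    (hφ.1 m _ hm).lt_of_ne' (Finset.prod_ne_zero_iff.1 hprod.ne' i hi)
  calc m * Real.log (φ (n + m) x) = Real.log (φ (n + m) x ^ m) := (Real.log_pow _ _).symm
    _ ≤ Real.log (M ^ (2 * m) * ∏ i ∈ Finset.range n, φ m (T^[i] x)) :=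
        Real.log_le_log (pow_pos hpos m) hle
    _ = 2 * m * Real.log M + ∑ i ∈ Finset.range n, Real.log (φ m (T^[i] x)) := by
        rw [Real.log_mul hM0.ne' hprod.ne', Real.log_pow,
          Real.log_prod fun i hi ↦ (hfactor i hi).ne']
        push_cast
        ring
    _ ≤ 2 * m * Real.log M + birkhoffSum T (fun y ↦ truncLog k (φ m y)) n x :=
        add_le_add_right (Finset.sum_le_sum fun i hi ↦ log_le_truncLog k (hfactor i hi)) _

theorem exists_mul_log_le_birkhoffSum_add (hφ : IsSubmultiplicativeCocycle T φ)
    (hbdd : ∀ i, 1 ≤ i → BddAbove (range (φ i))) {m : ℕ} (hm : 1 ≤ m) (k : ℕ) :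
    ∃ C : ℝ, ∀ n ≥ m, ∀ x, 0 < φ n x →
      m * Real.log (φ n x) ≤ birkhoffSum T (fun y ↦ truncLog k (φ m y)) n x + C := by
  obtain ⟨M, hM⟩ : BddAbove (⋃ i ∈ Icc 1 m, range (φ i)) :=
    (finite_Icc 1 m).bddAbove_biUnion.2 fun i hi ↦ hbdd i hi.1
  have hM' : ∀ i ∈ Icc 1 m, ∀ x, φ i x ≤ max 1 M := fun i hi x ↦
    (hM (mem_biUnion hi (mem_range_self x))).trans (le_max_right _ _)
  refine ⟨2 * m * Real.log (max 1 M) + m * k, fun n hn x hpos ↦ ?_⟩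
  obtain ⟨p, rfl⟩ := Nat.exists_eq_add_of_le' hn
  have htail : -(m * k : ℝ) ≤ birkhoffSum T (fun y ↦ truncLog k (φ m y)) m (T^[p] x) := by
    simpa [birkhoffSum] using Finset.card_nsmul_le_sum (Finset.range m) _ (-(k : ℝ))
      fun i _ ↦ neg_natCast_le_truncLog k (φ m (T^[i] (T^[p] x)))
  have hhead := hφ.mul_log_le_add_birkhoffSum hm (le_max_left 1 M) hM' hpos k
  rw [birkhoffSum_add]
  linarith

end IsSubmultiplicativeCocycle

end Cocycle

section ErgodicOptimization

lemma exists_eq_iSup_of_continuous {X : Type*} [TopologicalSpace X] [CompactSpace X] [Nonempty X]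
    {f : X → ℝ} (hf : Continuous f) : ∃ x, f x = ⨆ y, f y := by
  obtain ⟨x, -, hx⟩ := isCompact_univ.exists_sSup_image_eq univ_nonempty hf.continuousOn
  exact ⟨x, by rw [← hx, image_univ, sSup_range]⟩

variable {X : Type*} [TopologicalSpace X] [CompactSpace X] [MeasurableSpace X] [BorelSpace X]
  {T : X → X} {φ : ℕ → X → ℝ} {β : ℝ}

theorem exists_mem_invariantMeasures_forall_mul_le_eint [T2Space X] [HasOuterApproxClosed X]
    [Nonempty X] (hT : Continuous T) (hφ : SubadditivePotential T φ)
    (hβ : Tendsto (fun n : ℕ ↦ elog (⨆ x, φ n x) / (n : EReal)) atTop (𝓝 (β : EReal))) :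
    ∃ μ ∈ invariantMeasures T, ∀ m : ℕ, 1 ≤ m →
      ((m * β : ℝ) : EReal) ≤ eint (μ : Measure X) (fun x ↦ elog (φ m x)) := by
  have hcocycle : IsSubmultiplicativeCocycle T φ := hφ.2
  choose x hx using fun n ↦ exists_eq_iSup_of_continuous (hφ.1 (n + 1) (Nat.le_add_left 1 n))
  obtain ⟨μ, hμ, U, hU, hlim⟩ := exists_mem_invariantMeasures_tendsto_birkhoffAverage hT x
  refine ⟨μ, hμ, fun m hm ↦ ?_⟩
  have hcont (k : ℕ) : Continuous fun y ↦ truncLog k (φ m y) :=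
    (continuous_truncLog k).comp (hφ.1 m hm)
  have hint (k : ℕ) : Integrable (fun y ↦ truncLog k (φ m y)) (μ : Measure X) :=
    (hcont k).integrable_of_hasCompactSupport (HasCompactSupport.of_compactSpace _)
  refine ge_of_tendsto' (tendsto_integral_truncLog (hφ.1 m hm).measurable.aemeasurable hint)
    fun k ↦ EReal.coe_le_coe_iff.2 ?_
  obtain ⟨C, hC⟩ := hcocycle.exists_mul_log_le_birkhoffSum_add
    (fun i hi ↦ (isCompact_range (hφ.1 i hi)).bddAbove) hm k
  have hmax : Tendsto (fun n : ℕ ↦ m * (Real.log (φ (n + 1) (x n)) / (n + 1 : ℕ)) -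
      C / (n + 1 : ℕ)) U (𝓝 (m * β)) := by
    have hlog := (tendsto_log_div_of_tendsto_elog_div hβ).const_mul (m : ℝ)
    have hdiff := hlog.sub (tendsto_const_div_atTop_nhds_zero_nat C)
    simpa only [hx, sub_zero, Function.comp_def] using
      (hdiff.comp (tendsto_add_atTop_nat 1)).mono_left hU
  refine le_of_tendsto_of_tendsto hmax (hlim _ (hcont k)) (hU ?_)
  filter_upwards [eventually_ge_atTop m,
    (tendsto_add_atTop_nat 1).eventually (eventually_pos_of_tendsto_elog_div hβ)] with n hn hpos
  have hle := hC (n + 1) (by omega) (x n) (by rwa [hx])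
  rw [birkhoffAverage, smul_eq_mul, ← div_eq_inv_mul, ← mul_div_assoc, ← sub_div]
  gcongr
  linarith

theorem isGreatest_exponents [T2Space X] [HasOuterApproxClosed X] [Nonempty X]
    (hT : Continuous T) (hφ : SubadditivePotential T φ) {χ : ProbabilityMeasure X → EReal}
    (hχ : ∀ μ ∈ invariantMeasures T,
      Tendsto (fun n : ℕ ↦ eint (μ : Measure X) (fun x ↦ elog (φ n x)) / (n : EReal))
        atTop (𝓝 (χ μ)))
    (hβ : Tendsto (fun n : ℕ ↦ elog (⨆ x, φ n x) / (n : EReal)) atTop (𝓝 (β : EReal))) :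
    IsGreatest (χ '' invariantMeasures T) β := by
  have hle : ∀ μ ∈ invariantMeasures T, χ μ ≤ β := by
    intro μ hμ
    refine le_of_tendsto_of_tendsto (hχ μ hμ) hβ ?_
    filter_upwards [eventually_ge_atTop 1] with n hn
    exact EReal.div_le_div_right_of_nonneg (Nat.cast_nonneg' n)
      (eint_elog_le_elog_iSup (isCompact_range (hφ.1 n hn)).bddAbove)
  obtain ⟨μ, hμ, hge⟩ := exists_mem_invariantMeasures_forall_mul_le_eint hT hφ hβ
  refine ⟨⟨μ, hμ, (hle μ hμ).antisymm (ge_of_tendsto (hχ μ hμ) ?_)⟩, forall_mem_image.2 hle⟩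
  filter_upwards [eventually_ge_atTop 1] with n hn
  rw [EReal.le_div_iff_mul_le (by exact_mod_cast hn) (EReal.natCast_ne_top n), mul_comm,
    ← EReal.coe_natCast, ← EReal.coe_mul]
  exact hge n hn

end ErgodicOptimization

section AffineSupremum

lemma convexOn_of_isLUB {𝕜 E F ι : Type*} [Semiring 𝕜] [PartialOrder 𝕜] [AddCommMonoid E]
    [SMul 𝕜 E] [AddCommMonoid F] [PartialOrder F] [IsOrderedAddMonoid F] [Module 𝕜 F]
    [PosSMulMono 𝕜 F] {D : Set E} (hD : Convex 𝕜 D) {I : Set ι} {f : ι → E → F} {g : E → F}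
    (hf : ∀ i ∈ I, ConvexOn 𝕜 D (f i)) (hg : ∀ x ∈ D, IsLUB ((f · x) '' I) (g x)) :
    ConvexOn 𝕜 D g := by
  refine ⟨hD, fun x hx y hy a b ha hb hab ↦
    (hg _ (hD hx hy ha hb hab)).2 (forall_mem_image.2 fun i hi ↦ ?_)⟩
  have hfx : f i x ≤ g x := (hg x hx).1 (mem_image_of_mem _ hi)
  have hfy : f i y ≤ g y := (hg y hy).1 (mem_image_of_mem _ hi)
  calc f i (a • x + b • y) ≤ a • f i x + b • f i y := (hf i hi).2 hx hy ha hb hab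
    _ ≤ a • g x + b • g y :=
        add_le_add (smul_le_smul_of_nonneg_left hfx ha) (smul_le_smul_of_nonneg_left hfy hb)

lemma tendsto_const_div_add_atTop (a b : ℝ) : Tendsto (fun t : ℝ ↦ a / t + b) atTop (𝓝 b) := by
  simpa using (tendsto_id.const_div_atTop a).add_const b

theorem tendsto_div_atTop_of_isLUB_affine {A : Set (ℝ × ℝ)} {P : ℝ → ℝ} {β : ℝ}
    (hP : ∀ t ∈ Ioi (0 : ℝ), IsLUB ((fun p : ℝ × ℝ ↦ p.1 + t * p.2) '' A) (P t))
    (hβ : IsLUB (Prod.snd '' A) β) : Tendsto (fun t ↦ P t / t) atTop (𝓝 β) := by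
  have hlower {p : ℝ × ℝ} (hp : p ∈ A) {t : ℝ} (ht : 0 < t) : p.1 + t * p.2 ≤ P t :=
    (hP t ht).1 (mem_image_of_mem _ hp)
  have hupper {t : ℝ} (ht : 1 ≤ t) : P t ≤ P 1 + (t - 1) * β := by
    refine (hP t (one_pos.trans_le ht)).2 (forall_mem_image.2 fun p hp ↦ ?_)
    have hslope : (t - 1) * p.2 ≤ (t - 1) * β :=
      mul_le_mul_of_nonneg_left (hβ.1 (mem_image_of_mem _ hp)) (sub_nonneg.2 ht)
    linarith [hlower hp one_pos]
  refine tendsto_order.2 ⟨fun b hb ↦ ?_, fun b hb ↦ ?_⟩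
  · obtain ⟨_, ⟨p, hp, rfl⟩, hbp, -⟩ := hβ.exists_between hb
    filter_upwards [(tendsto_const_div_add_atTop p.1 p.2).eventually_const_lt hbp,
      eventually_gt_atTop 0] with t hbt ht
    refine hbt.trans_le ((le_div_iff₀ ht).2 ?_)
    calc (p.1 / t + p.2) * t = p.1 + t * p.2 := by field_simp
      _ ≤ P t := hlower hp ht
  · filter_upwards [(tendsto_const_div_add_atTop (P 1 - β) β).eventually_lt_const hb,
      eventually_ge_atTop 1] with t htb ht
    have ht0 : 0 < t := one_pos.trans_le ht
    refine ((div_le_iff₀ ht0).2 ?_).trans_lt htb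
    calc P t ≤ P 1 + (t - 1) * β := hupper ht
      _ = ((P 1 - β) / t + β) * t := by field_simp; ring

variable {ι : Type*} {s : Set ι} {h : ι → ℝ} {χ : ι → EReal}

/-- The pairs `(h i, χ i)`, `i ∈ s`, for which the exponent `χ i` is a real number. These are the
pairs over which the variational principle takes the supremum of `h i + t χ i`. -/
def finiteExponentPairs (s : Set ι) (h : ι → ℝ) (χ : ι → EReal) : Set (ℝ × ℝ) :=
  {p | ∃ i ∈ s, h i = p.1 ∧ χ i = p.2}

lemma isLUB_snd_finiteExponentPairs {β : ℝ} (hβ : IsLUB (χ '' s) β) :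
    IsLUB (Prod.snd '' finiteExponentPairs s h χ) β := by
  constructor
  · rintro _ ⟨p, ⟨i, hi, -, hc⟩, rfl⟩
    exact EReal.coe_le_coe_iff.1 (hc ▸ hβ.1 (mem_image_of_mem χ hi))
  · intro b hb
    refine EReal.coe_le_coe_iff.1 (hβ.2 (forall_mem_image.2 fun i hi ↦ ?_))
    induction hc : χ i with
    | bot => exact bot_le
    | coe c => exact EReal.coe_le_coe_iff.2 (hb ⟨(h i, c), ⟨i, hi, rfl, hc⟩, rfl⟩)
    | top => exact absurd (hc ▸ hβ.1 (mem_image_of_mem χ hi)) (EReal.coe_lt_top β).not_ge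

lemma isLUB_finiteExponentPairs {t P : ℝ} (ht : 0 < t)
    (hP : (P : EReal) = sSup ((fun i ↦ (h i : EReal) + (t : EReal) * χ i) '' s)) :
    IsLUB ((fun p : ℝ × ℝ ↦ p.1 + t * p.2) '' finiteExponentPairs s h χ) P := by
  have hle : ∀ i ∈ s, (h i : EReal) + (t : EReal) * χ i ≤ P := fun i hi ↦
    hP ▸ le_sSup (mem_image_of_mem _ hi)
  constructor
  · rintro _ ⟨⟨_, c⟩, ⟨i, hi, rfl, hc⟩, rfl⟩
    have := hle i hi
    rw [hc] at this
    exact_mod_cast this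
  · intro b hb
    rw [← EReal.coe_le_coe_iff, hP]
    refine sSup_le (forall_mem_image.2 fun i hi ↦ ?_)
    induction hc : χ i with
    | bot => simp [EReal.coe_mul_bot_of_pos ht]
    | coe c => exact_mod_cast hb ⟨(h i, c), ⟨i, hi, rfl, hc⟩, rfl⟩
    | top =>
      have htop := hle i hi
      rw [hc, EReal.coe_mul_top_of_pos ht, EReal.coe_add_top] at htop
      exact absurd htop (EReal.coe_lt_top P).not_ge

end AffineSupremum

theorem pressure_function_convex_continuous_and_slope_tendsto_beta_general
    {X : Type*} [TopologicalSpace X] [CompactSpace X] [T2Space X] [HasOuterApproxClosed X]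
    [Nonempty X] [MeasurableSpace X] [BorelSpace X]
    {T : X → X} (hT : Continuous T) {φ : ℕ → X → ℝ} (hφ : SubadditivePotential T φ)
    {h : ProbabilityMeasure X → ℝ} {χ : ProbabilityMeasure X → EReal}
    (hχ : ∀ μ ∈ invariantMeasures T,
      Tendsto (fun n : ℕ ↦ eint (μ : Measure X) (fun x ↦ elog (φ n x)) / (n : EReal))
        atTop (𝓝 (χ μ)))
    {β : ℝ}
    (hβ : Tendsto (fun n : ℕ ↦ elog (⨆ x, φ n x) / (n : EReal)) atTop (𝓝 (β : EReal)))
    {P : ℝ → ℝ}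
    (hP : ∀ t ∈ Ioi (0 : ℝ), (P t : EReal) =
      sSup ((fun μ ↦ (h μ : EReal) + (t : EReal) * χ μ) '' invariantMeasures T)) :
    ContinuousOn P (Ioi 0) ∧ ConvexOn ℝ (Ioi 0) P ∧ Tendsto (fun t ↦ P t / t) atTop (𝓝 β) := by
  have hlub : ∀ t ∈ Ioi (0 : ℝ), IsLUB ((fun p : ℝ × ℝ ↦ p.1 + t * p.2) ''
      finiteExponentPairs (invariantMeasures T) h χ) (P t) := fun t ht ↦
    isLUB_finiteExponentPairs ht (hP t ht)
  have haffine (p : ℝ × ℝ) : ConvexOn ℝ (Ioi 0) fun t : ℝ ↦ p.1 + t * p.2 :=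
    (convexOn_const p.1 (convex_Ioi 0)).add
      ((LinearMap.mulRight ℝ p.2).convexOn (convex_Ioi 0))
  have hconvex : ConvexOn ℝ (Ioi 0) P :=
    convexOn_of_isLUB (convex_Ioi 0) (fun p _ ↦ haffine p) hlub
  exact ⟨hconvex.continuousOn isOpen_Ioi, hconvex, tendsto_div_atTop_of_isLUB_affine hlub
    (isLUB_snd_finiteExponentPairs (isGreatest_exponents hT hφ hχ hβ).isLUB)⟩

/-- Feng–Huang: for a TDS with finite topological entropy and a
subadditive potential Φ with β(Φ) > -∞, the pressure function
t ↦ P(t) = sup{h_μ(T) + t χ(μ,Φ)} is continuous, convex and real on (0,∞),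
and P(t)/t → β(Φ) as t → ∞. -/
theorem pressure_function_convex_continuous_and_slope_tendsto_beta
    {X : Type*} [MetricSpace X] [CompactSpace X] [Nonempty X]
    [MeasurableSpace X] [BorelSpace X]
    (T : X → X) (hT : Continuous T)
    (φ : ℕ → X → ℝ) (hφ : SubadditivePotential T φ)
    -- metric entropies, with finite topological entropy (variational principle)
    (h : ProbabilityMeasure X → ℝ) (hh0 : ∀ μ, 0 ≤ h μ)
    (htop : ∃ H : ℝ, ∀ μ : ProbabilityMeasure X,
      Measure.map T (μ : Measure X) = (μ : Measure X) → h μ ≤ H)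
    -- Lyapunov exponents of invariant measures
    (χ : ProbabilityMeasure X → EReal)
    (hχ : ∀ μ : ProbabilityMeasure X, Measure.map T (μ : Measure X) = (μ : Measure X) →
      Tendsto (fun n : ℕ => eint (μ : Measure X) (fun x => elog (φ n x)) / (n : EReal))
        atTop (𝓝 (χ μ)))
    -- β(Φ), finite since β(Φ) > -∞ (and always < ∞)
    (β : ℝ)
    (hβ : Tendsto (fun n : ℕ => elog (⨆ x, φ n x) / (n : EReal)) atTop (𝓝 (β : EReal)))
    -- the topological pressure, via the variational principle
    (P : ℝ → ℝ)
    (hP : ∀ t ∈ Set.Ioi (0 : ℝ), (P t : EReal) =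
      sSup ((fun μ => (h μ : EReal) + (t : EReal) * χ μ) ''
        {μ : ProbabilityMeasure X | Measure.map T (μ : Measure X) = (μ : Measure X)})) :
    ContinuousOn P (Set.Ioi 0) ∧ ConvexOn ℝ (Set.Ioi 0) P ∧
      Tendsto (fun t => P t / t) atTop (𝓝 β) :=
  pressure_function_convex_continuous_and_slope_tendsto_beta_general hT hφ hχ hβ hP
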